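/- Let U and V be minimal representations such that for every valuation σ the maximum of ⟦u⟧σ over u ∈ U equals the maximum of ⟦v⟧σ over v ∈ V. Then for every finite set E and S ∈ ℕ, the sublevel B(E, S) belongs to U if and only if it belongs to V. -/

import Mathlib

/-- The impredicative maximum on natural numbers. -/
def imaxN : ℕ → ℕ → ℕ
  | _, 0 => 0
  | i, (j+1) => max i (j+1)

/-- Sublevels A(E,x,S) and B(E,S). -/
inductive SubLvl where
  | A : Finset ℕ → ℕ → ℕ → SubLvl
  | B : Finset ℕ → ℕ → SubLvl
deriving DecidableEq

/-- Value of a sublevel under a valuation. -/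
def evalS (σ : ℕ → ℕ) : SubLvl → ℕ
  | .A E x S => if ∃ y ∈ E, σ y = 0 then 0 else σ x + S
  | .B E S => if ∃ y ∈ E, σ y = 0 then 0 else S

/-- Wellformed sublevels. -/
def Wf : SubLvl → Prop
  | .A E x _ => x ∈ E
  | .B _ S => 0 < S

/-- Semantic comparison of sublevels. -/
def leT (u v : SubLvl) : Prop := ∀ σ : ℕ → ℕ, evalS σ u ≤ evalS σ v

/-- A minimal representation: a finite set of wellformed, pairwise
incomparable sublevels. -/
def MinRep (U : Finset SubLvl) : Prop :=
  (∀ u ∈ U, Wf u) ∧ ∀ u ∈ U, ∀ v ∈ U, u ≠ v → ¬ leT u v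


def cst : SubLvl → ℕ
  | .A _ _ S => S
  | .B _ S => S

theorem ex_dom (U : Finset SubLvl) (hU : ∀ u ∈ U, Wf u) (v : SubLvl) (hv : Wf v)
    (h : ∀ σ : ℕ → ℕ, evalS σ v ≤ U.sup (evalS σ)) : ∃ u ∈ U, leT v u := by
  cases v with
  | B E S =>
    have hS : 0 < S := hv
    have h1 := h (fun y => if y ∈ E then 1 else 0)
    have e : evalS (fun y => if y ∈ E then 1 else 0) (.B E S) = S := by
      simp [evalS]
    rw [e, Finset.le_sup_iff hS] at h1
    obtain ⟨u, hu, h2⟩ := h1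
    refine ⟨u, hu, ?_⟩
    cases u with
    | B F T =>
      simp only [evalS] at h2
      split_ifs at h2 with h3
      · omega
      · intro σ
        have hFE : ∀ y ∈ F, y ∈ E := by
          intro y hy; by_contra hn; exact h3 ⟨y, hy, by simp [hn]⟩
        simp only [evalS]
        split_ifs with h4 h5 h5 <;> first | omega | skip
        obtain ⟨y, hy, h0⟩ := h5
        exact absurd ⟨y, hFE y hy, h0⟩ h4
    | A F x T =>
      have hx : x ∈ F := hU _ hu
      simp only [evalS] at h2
      by_cases h3 : ∃ y ∈ F, (if y ∈ E then 1 else 0) = 0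
      · rw [if_pos h3] at h2; omega
      · rw [if_neg h3] at h2
        intro σ
        have hFE : ∀ y ∈ F, y ∈ E := by
          intro y hy; by_contra hn; exact h3 ⟨y, hy, by simp [hn]⟩
        rw [if_pos (hFE x hx)] at h2
        simp only [evalS]
        split_ifs with h4 h5 h5
        · omega
        · omega
        · obtain ⟨y, hy, h0⟩ := h5
          exact absurd ⟨y, hFE y hy, h0⟩ h4
        · have : σ x ≠ 0 := fun h0 => h4 ⟨x, hFE x hx, h0⟩
          omega
  | A E x S =>
    have hx : x ∈ E := hv
    obtain ⟨N, hN⟩ : ∃ N, N = U.sup cst + 2 := ⟨_, rfl⟩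
    obtain ⟨τ, hτ⟩ : ∃ τ : ℕ → ℕ, τ = fun y => if y = x then N else if y ∈ E then 1 else 0 :=
      ⟨_, rfl⟩
    have tx : τ x = N := by simp [hτ]
    have t1 : ∀ y, y ≠ x → τ y ≤ 1 := by
      intro y hy; simp only [hτ, if_neg hy]; split_ifs <;> omega
    have t0 : ∀ y, y ∉ E → τ y = 0 := by
      intro y hy
      have : y ≠ x := fun h => hy (h ▸ hx)
      simp [hτ, this, hy]
    have tE : ∀ y ∈ E, τ y ≠ 0 := by
      intro y hy
      simp only [hτ, if_pos hy]; split_ifs <;> omega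
    have h1 := h τ
    have e : evalS τ (.A E x S) = N + S := by
      simp only [evalS]
      rw [if_neg, tx]
      rintro ⟨y, hy, h0⟩; exact tE y hy h0
    rw [e, Finset.le_sup_iff (by simp only [Nat.bot_eq_zero]; omega)] at h1
    obtain ⟨u, hu, h2⟩ := h1
    have hc : cst u ≤ U.sup cst := Finset.le_sup hu
    refine ⟨u, hu, ?_⟩
    cases u with
    | B F T =>
      simp only [evalS, cst] at h2 hc
      split_ifs at h2 <;> omega
    | A F z T =>
      simp only [evalS, cst] at h2 hc
      split_ifs at h2 with h3
      · omega
      · have hz : z = x := by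
          by_contra hn
          have := t1 z hn
          omega
        subst hz
        have hFE : ∀ y ∈ F, y ∈ E := by
          intro y hy; by_contra hn; exact h3 ⟨y, hy, t0 y hn⟩
        intro σ
        simp only [evalS]
        split_ifs with h4 h5 h5 <;> first | omega | skip
        obtain ⟨y, hy, h0⟩ := h5
        exact absurd ⟨y, hFE y hy, h0⟩ h4

theorem sub_of_le (E F : Finset ℕ) (S T : ℕ) (hS : 0 < S) (h : leT (.B E S) (.B F T)) :
    F ⊆ E ∧ S ≤ T := by
  have h1 := h (fun y => if y ∈ E then 1 else 0)
  have e : evalS (fun y => if y ∈ E then 1 else 0) (.B E S) = S := by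
    simp [evalS]
  rw [e] at h1
  simp only [evalS] at h1
  split_ifs at h1 with h3
  · omega
  · exact ⟨fun y hy => by by_contra hn; exact h3 ⟨y, hy, by simp [hn]⟩, h1⟩

theorem anti_B (E : Finset ℕ) (S : ℕ) (v : SubLvl) (hS : 0 < S) (hv : Wf v)
    (h1 : leT (.B E S) v) (h2 : leT v (.B E S)) : v = .B E S := by
  cases v with
  | B F T =>
    obtain ⟨a, b⟩ := sub_of_le _ _ _ _ hS h1
    obtain ⟨c, d⟩ := sub_of_le _ _ _ _ hv h2
    rw [Finset.Subset.antisymm a c, le_antisymm d b]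
  | A F x T =>
    have := h2 (fun _ => S + 1)
    simp [evalS] at this
    omega

theorem one_dir (U V : Finset SubLvl) (hU : MinRep U) (hV : MinRep V)
    (h : ∀ σ : ℕ → ℕ, U.sup (evalS σ) = V.sup (evalS σ)) (E : Finset ℕ) (S : ℕ)
    (hB : SubLvl.B E S ∈ U) : SubLvl.B E S ∈ V := by
  obtain ⟨v, hv, l1⟩ := ex_dom V hV.1 _ (hU.1 _ hB)
    (fun σ => (h σ) ▸ Finset.le_sup (f := evalS σ) hB)
  obtain ⟨u, hu, l2⟩ := ex_dom U hU.1 _ (hV.1 _ hv)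
    (fun σ => (h σ).symm ▸ Finset.le_sup (f := evalS σ) hv)
  have hu' : SubLvl.B E S = u := by
    by_contra hn
    exact hU.2 _ hB _ hu hn (fun σ => (l1 σ).trans (l2 σ))
  subst hu'
  have := anti_B E S v (hU.1 _ hB) (hV.1 _ hv) l1 l2
  exact this ▸ hv

theorem minrep_same_B (U V : Finset SubLvl) (hU : MinRep U) (hV : MinRep V)
    (h : ∀ σ : ℕ → ℕ, U.sup (evalS σ) = V.sup (evalS σ)) :
    ∀ (E : Finset ℕ) (S : ℕ), SubLvl.B E S ∈ U ↔ SubLvl.B E S ∈ V := by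
  intro E S
  exact ⟨one_dir U V hU hV h E S, one_dir V U hV hU (fun σ => (h σ).symm) E S⟩
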